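/- (Gessel–Stanton open problem (6.3).) Let n be a natural number, n ≥ 1, and a ∈ ℂ such that (a/2)_k ≠ 0 and (2a+1+3n)_k ≠ 0 for all 0 ≤ k ≤ n. Then ∑_{k=0}^{n} ((a+1/2)_k (a)_k (−n)_k ((2a+1)/3+n)_k (a/2+1)_k)/((1/2)_k (−3n)_k (2a+1+3n)_k (a/2)_k · k!) · 9^k = (((2a+2)/3)_n (2a/3+1)_n)/((2/3)_n (1/3)_n). -/

import Mathlib

/-- Pochhammer symbol (shifted factorial) of a complex number. -/
noncomputable def poch (a : ℂ) (k : ℕ) : ℂ := ∏ j ∈ Finset.range k, (a + j)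

theorem poch_succ (x : ℂ) (k : ℕ) : poch x (k + 1) = poch x k * (x + k) := by
  simp [poch, Finset.prod_range_succ]

theorem poch_zero (x : ℂ) : poch x 0 = 1 := by simp [poch]

theorem poch_shift (x : ℂ) (k : ℕ) : x * poch (x + 1) k = poch x k * (x + k) := by
  rw [← poch_succ, poch, poch, Finset.prod_range_succ']
  simp [mul_comm, add_comm, add_left_comm]

theorem poch_ne (x : ℂ) (k : ℕ) (h : ∀ j < k, x + (j : ℂ) ≠ 0) : poch x k ≠ 0 :=
  Finset.prod_ne_zero_iff.2 fun j hj => h j (Finset.mem_range.1 hj)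

theorem poch_shift' (x y : ℂ) (k : ℕ) (hx : x ≠ 0) (hy : y = x + 1) :
    poch y k = poch x k * (x + k) / x := by
  rw [hy, ← poch_shift]; field_simp

theorem poch_shift3 (x y : ℂ) (k : ℕ) (hx : x ≠ 0) (hx1 : x + 1 ≠ 0) (hx2 : x + 2 ≠ 0)
    (hy : y = x + 3) :
    poch y k = poch x k * ((x + k) * (x + 1 + k) * (x + 2 + k)) / (x * (x + 1) * (x + 2)) := by
  rw [poch_shift' (x + 2) y k hx2 (by rw [hy]; ring),
    poch_shift' (x + 1) (x + 2) k hx1 (by ring), poch_shift' x (x + 1) k hx rfl]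
  field_simp

/-- The summand. -/
noncomputable def gsTerm (N a : ℂ) (k : ℕ) : ℂ :=
  poch (a + 1 / 2) k * poch a k * poch (-N) k *
            poch ((2 * a + 1) / 3 + N) k * poch (a / 2 + 1) k /
          (poch (1 / 2) k * poch (-3 * N) k *
            poch (2 * a + 1 + 3 * N) k * poch (a / 2) k *
            (k.factorial : ℂ)) * (9 : ℂ) ^ k

/-- The right-hand side. -/
noncomputable def gsRhs (a : ℂ) (n : ℕ) : ℂ :=
  poch ((2 * a + 2) / 3) n * poch (2 * a / 3 + 1) n / (poch (2 / 3) n * poch (1 / 3) n)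

/-- The common hypergeometric term of the WZ pair. -/
noncomputable def gsU (N a : ℂ) (k : ℕ) : ℂ :=
  poch (a + 1 / 2) k * poch a k * poch (-(N + 1)) k * poch ((2 * a + 1) / 3 + N) k /
    (poch (1 / 2) k * poch (-3 * N) k * poch (2 * a + 1 + 3 * N + 3) k * (k.factorial : ℂ)) *
    (9 : ℂ) ^ k

/-- The WZ certificate. -/
noncomputable def gsG (N a : ℂ) (k : ℕ) : ℂ :=
  gsU N a k * (2 * (3 * N + a + 2) / (3 * a * (N + 1) * (2 * a + 1 + 3 * N) *
    (3 * N + 1) * (3 * N + 2))) * (k * (2 * k - 1) * (2 * a + 1 + 3 * N + k + 2) * (k - 3 * N - 1))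

theorem half_ne (k : ℕ) : poch (1 / 2) k ≠ 0 := by
  apply poch_ne
  intro j _ h
  have h' : ((2 * j + 1 : ℕ) : ℂ) = 0 := by push_cast; linear_combination 2 * h
  have := Nat.cast_eq_zero.1 h'
  omega

theorem third_ne (k : ℕ) : poch (1 / 3) k ≠ 0 := by
  apply poch_ne
  intro j _ h
  have h' : ((3 * j + 1 : ℕ) : ℂ) = 0 := by push_cast; linear_combination 3 * h
  have := Nat.cast_eq_zero.1 h'
  omega

theorem twothird_ne (k : ℕ) : poch (2 / 3) k ≠ 0 := by
  apply poch_ne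
  intro j _ h
  have h' : ((3 * j + 2 : ℕ) : ℂ) = 0 := by push_cast; linear_combination 3 * h
  have := Nat.cast_eq_zero.1 h'
  omega

theorem neg3_ne (n k : ℕ) (h : k ≤ 3 * n) : poch (-3 * (n : ℂ)) k ≠ 0 := by
  apply poch_ne
  intro j hj h0
  have : ((3 * n : ℕ) : ℂ) = (j : ℂ) := by push_cast; linear_combination -h0
  have : 3 * n = j := by exact_mod_cast this
  omega

theorem gen_ne (a : ℂ) (ha : ∀ m : ℤ, 2 * a ≠ m) (m : ℤ) : 2 * a + m ≠ 0 := by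
  intro h
  apply ha (-m)
  push_cast
  linear_combination h

theorem gsTerm_eq (n : ℕ) (a : ℂ) (ha : ∀ m : ℤ, 2 * a ≠ m) (k : ℕ) :
    gsTerm n a k = gsU n a k * ((a + 2 * k) / a * (((n : ℂ) + 1 - k) / (n + 1)) *
      ((2 * a + 1 + 3 * n + k) * (2 * a + 1 + 3 * n + 1 + k) * (2 * a + 1 + 3 * n + 2 + k) /
      ((2 * a + 1 + 3 * n) * (2 * a + 1 + 3 * n + 1) * (2 * a + 1 + 3 * n + 2)))) := by
  have g := gen_ne a ha
  have a0 : a ≠ 0 := by intro h; apply ha 0; simp [h]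
  have n1 : (n : ℂ) + 1 ≠ 0 := by exact_mod_cast Nat.succ_ne_zero n
  have b0 : 2 * a + 1 + 3 * (n : ℂ) ≠ 0 := by
    have := g (1 + 3 * n); push_cast at this; rwa [← add_assoc] at this
  have b1 : 2 * a + 1 + 3 * (n : ℂ) + 1 ≠ 0 := by
    have := g (1 + 3 * n + 1); push_cast at this; rwa [← add_assoc, ← add_assoc] at this
  have b2 : 2 * a + 1 + 3 * (n : ℂ) + 2 ≠ 0 := by
    have := g (1 + 3 * n + 2); push_cast at this; rwa [← add_assoc, ← add_assoc] at this
  have bk (j : ℕ) : 2 * a + 1 + 3 * (n : ℂ) + j ≠ 0 := by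
    have := g (1 + 3 * n + j); push_cast at this; rwa [← add_assoc, ← add_assoc] at this
  have bk0 := bk k
  have bk1 : 2 * a + 1 + 3 * (n : ℂ) + 1 + k ≠ 0 := by
    have := bk (1 + k); push_cast at this; rwa [← add_assoc] at this
  have bk2 : 2 * a + 1 + 3 * (n : ℂ) + 2 + k ≠ 0 := by
    have := bk (2 + k); push_cast at this; rwa [← add_assoc] at this
  have pa : poch (a / 2) k ≠ 0 := by
    apply poch_ne
    intro j _ h
    have := g (4 * j)
    push_cast at this
    exact this (by linear_combination 4 * h)
  unfold gsTerm gsU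
  rw [poch_shift' (a / 2) (a / 2 + 1) k (div_ne_zero a0 two_ne_zero) rfl,
    poch_shift' (-((n : ℂ) + 1)) (-(n : ℂ)) k (neg_ne_zero.2 n1) (by ring),
    poch_shift3 _ _ k b0 b1 b2 rfl]
  have pb : poch (2 * a + 1 + 3 * (n : ℂ)) k ≠ 0 := poch_ne _ _ fun j _ => bk j
  generalize 2 * a + 1 + 3 * (n : ℂ) = b at *
  generalize poch b k = B at *
  generalize poch (-3 * (n : ℂ)) k = C at *
  have hk : (k.factorial : ℂ) ≠ 0 := by exact_mod_cast k.factorial_ne_zero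
  have hh := half_ne k
  generalize poch (1 / 2) k = D at *
  by_cases hC : C = 0
  · simp [hC]
  field_simp
  try ring

theorem gsTerm_eq' (n : ℕ) (hn : 1 ≤ n) (a : ℂ) (ha : ∀ m : ℤ, 2 * a ≠ m) (k : ℕ) 
    (hk3 : k ≤ 3 * n) :
    gsTerm ((n + 1 : ℕ) : ℂ) a k = gsU n a k * ((a + 2 * k) / a *
      ((2 * a + 1 + 3 * n + 3 * k) / (2 * a + 1 + 3 * n)) *
      ((3 * n + 1 - k) * (3 * n + 2 - k) * (3 * n + 3 - k) /
      ((3 * n + 1) * (3 * n + 2) * (3 * n + 3)))) := by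
  have g := gen_ne a ha
  have a0 : a ≠ 0 := by intro h; apply ha 0; simp [h]
  have n1 : 3 * (n : ℂ) + 1 ≠ 0 := by exact_mod_cast Nat.succ_ne_zero (3 * n)
  have n2 : 3 * (n : ℂ) + 2 ≠ 0 := by exact_mod_cast Nat.succ_ne_zero (3 * n + 1)
  have n3 : 3 * (n : ℂ) + 3 ≠ 0 := by exact_mod_cast Nat.succ_ne_zero (3 * n + 2)
  have m1 : 3 * (n : ℂ) + 1 - k ≠ 0 := by
    rw [sub_ne_zero]; exact_mod_cast (by omega : 3 * n + 1 ≠ k)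
  have m2 : 3 * (n : ℂ) + 2 - k ≠ 0 := by
    rw [sub_ne_zero]; exact_mod_cast (by omega : 3 * n + 2 ≠ k)
  have m3 : 3 * (n : ℂ) + 3 - k ≠ 0 := by
    rw [sub_ne_zero]; exact_mod_cast (by omega : 3 * n + 3 ≠ k)
  have b0 : 2 * a + 1 + 3 * (n : ℂ) ≠ 0 := by
    have := g (1 + 3 * n); push_cast at this; rwa [← add_assoc] at this
  have pa : poch (a / 2) k ≠ 0 := by
    apply poch_ne
    intro j _ h
    have := g (4 * j)
    push_cast at this
    exact this (by linear_combination 4 * h)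
  have hc := neg3_ne n k hk3
  have hc' : poch (-3 * (n : ℂ)) k = poch (-3 * ((n : ℂ) + 1)) k *
      ((3 * n + 1 - k) * (3 * n + 2 - k) * (3 * n + 3 - k)) /
      ((3 * n + 1) * (3 * n + 2) * (3 * n + 3)) := by
    rw [poch_shift3 (-3 * ((n : ℂ) + 1)) (-3 * (n : ℂ)) k
      (by intro h; apply n3; linear_combination -h) (by intro h; apply n2; linear_combination -h)
      (by intro h; apply n1; linear_combination -h) (by ring)]
    rw [div_eq_div_iff]
    · ring
    · refine mul_ne_zero (mul_ne_zero ?_ ?_) ?_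
      · intro h; apply n3; linear_combination -h
      · intro h; apply n2; linear_combination -h
      · intro h; apply n1; linear_combination -h
    · exact mul_ne_zero (mul_ne_zero n1 n2) n3
  have pc : poch (-3 * ((n : ℂ) + 1)) k ≠ 0 := by
    intro h; apply hc; rw [hc', h]; simp
  have hb : poch ((2 * a + 1) / 3 + ((n : ℂ) + 1)) k = poch ((2 * a + 1) / 3 + (n : ℂ)) k *
      ((2 * a + 1 + 3 * n + 3 * k) / (2 * a + 1 + 3 * n)) := by
    rw [poch_shift' ((2 * a + 1) / 3 + (n : ℂ)) _ k
      (by intro h; apply b0; linear_combination 3 * h) (by ring)]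
    have : (2 * a + 1) / 3 + (n : ℂ) = (2 * a + 1 + 3 * n) / 3 := by ring
    rw [this]
    field_simp
  have pb : poch (2 * a + 1 + 3 * (n : ℂ) + 3) k ≠ 0 := by
    apply poch_ne
    intro j _
    have := g (1 + 3 * n + 3 + j)
    push_cast at this
    rwa [← add_assoc, ← add_assoc, ← add_assoc] at this
  have hk : (k.factorial : ℂ) ≠ 0 := by exact_mod_cast k.factorial_ne_zero
  have hh := half_ne k
  unfold gsTerm gsU
  push_cast
  rw [poch_shift' (a / 2) (a / 2 + 1) k (div_ne_zero a0 two_ne_zero) rfl, hb, hc',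
    show 2 * a + 1 + 3 * ((n : ℂ) + 1) = 2 * a + 1 + 3 * (n : ℂ) + 3 by ring]
  generalize poch (2 * a + 1 + 3 * (n : ℂ) + 3) k = B at *
  generalize poch (-3 * ((n : ℂ) + 1)) k = C at *
  generalize poch (1 / 2) k = D at *
  generalize 3 * (n : ℂ) + 1 - k = x1 at *
  generalize 3 * (n : ℂ) + 2 - k = x2 at *
  generalize 3 * (n : ℂ) + 3 - k = x3 at *
  generalize 3 * (n : ℂ) + 1 = y1 at *
  generalize 3 * (n : ℂ) + 2 = y2 at *
  generalize 3 * (n : ℂ) + 3 = y3 at *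
  generalize poch (a + 1 / 2) k = P1 at *
  generalize poch ((2 * a + 1) / 3 + (n : ℂ)) k = P2 at *
  generalize poch (-((n : ℂ) + 1)) k = P3 at *
  generalize 2 * a + 1 + 3 * (n : ℂ) = b at *
  field_simp
  try ring

theorem gsU_succ (n : ℕ) (a : ℂ) (k : ℕ) :
    gsU n a (k + 1) = gsU n a k * ((a + 1 / 2 + k) * (a + k) * (-((n : ℂ) + 1) + k) *
      ((2 * a + 1) / 3 + n + k) / ((1 / 2 + k) * (-3 * n + k) * (2 * a + 1 + 3 * n + 3 + k) *
      (k + 1)) * 9) := by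
  unfold gsU
  simp only [poch_succ, Nat.factorial_succ, pow_succ]
  push_cast
  simp only [div_eq_mul_inv, mul_inv]
  ring

set_option maxRecDepth 20000 in
set_option maxHeartbeats 2000000 in
theorem gs_step (n : ℕ) (hn : 1 ≤ n) (a : ℂ) (ha : ∀ m : ℤ, 2 * a ≠ m) (k : ℕ)
    (hk3 : k < 3 * n) :
    gsTerm ((n + 1 : ℕ) : ℂ) a k - ((2 * a + 2 + 3 * n) * (2 * a + 3 + 3 * n) /
      ((3 * n + 2) * (3 * n + 1))) * gsTerm n a k = gsG n a (k + 1) - gsG n a k := by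
  rw [gsTerm_eq' n hn a ha k hk3.le, gsTerm_eq n a ha]
  unfold gsG
  rw [gsU_succ]
  have g := gen_ne a ha
  have a0 : a ≠ 0 := by intro h; apply ha 0; simp [h]
  have n0 : (n : ℂ) + 1 ≠ 0 := by exact_mod_cast Nat.succ_ne_zero n
  have n1 : 3 * (n : ℂ) + 1 ≠ 0 := by exact_mod_cast Nat.succ_ne_zero (3 * n)
  have n2 : 3 * (n : ℂ) + 2 ≠ 0 := by exact_mod_cast Nat.succ_ne_zero (3 * n + 1)
  have n3 : 3 * (n : ℂ) + 3 ≠ 0 := by exact_mod_cast Nat.succ_ne_zero (3 * n + 2)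
  have k1 : (k : ℂ) + 1 ≠ 0 := by exact_mod_cast Nat.succ_ne_zero k
  have k2 : 1 + 2 * (k : ℂ) ≠ 0 := by exact_mod_cast (by omega : 1 + 2 * k ≠ 0)
  have m1 : (k : ℂ) - 3 * n ≠ 0 := by
    rw [sub_ne_zero]; exact_mod_cast (by omega : k ≠ 3 * n)
  have b0 : 2 * a + 1 + 3 * (n : ℂ) ≠ 0 := by
    have := g (1 + 3 * n); push_cast at this; rwa [← add_assoc] at this
  have b1 : 2 * a + 2 + 3 * (n : ℂ) ≠ 0 := by
    have := g (2 + 3 * n); push_cast at this; rwa [← add_assoc] at this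
  have b2 : 2 * a + 3 + 3 * (n : ℂ) ≠ 0 := by
    have := g (3 + 3 * n); push_cast at this; rwa [← add_assoc] at this
  have bk : 2 * a + 4 + 3 * (n : ℂ) + k ≠ 0 := by
    have := g (4 + 3 * n + k); push_cast at this; rwa [← add_assoc, ← add_assoc] at this
  rw [show 2 * a + 1 + 3 * (n : ℂ) + 1 = 2 * a + 2 + 3 * (n : ℂ) by ring,
    show 2 * a + 1 + 3 * (n : ℂ) + 2 = 2 * a + 3 + 3 * (n : ℂ) by ring,
    show 2 * a + 1 + 3 * (n : ℂ) + 3 = 2 * a + 4 + 3 * (n : ℂ) by ring,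
    show (1 : ℂ) / 2 + k = (1 + 2 * k) / 2 by ring,
    show -3 * (n : ℂ) + k = k - 3 * n by ring]
  generalize gsU n a k = U
  push_cast
  rw [show (3 : ℂ) * n + 3 = 3 * (n + 1) by ring]
  clear ha g hk3 hn n3
  generalize (n : ℂ) = N at *
  generalize (k : ℂ) = K at *
  generalize e1 : 3 * N + 1 = y1 at *
  generalize e2 : 3 * N + 2 = y2 at *
  generalize e3 : N + 1 = y3 at *
  generalize e4 : 2 * a + 1 + 3 * N = c1 at *
  generalize e5 : 2 * a + 2 + 3 * N = c2 at *
  generalize e6 : 2 * a + 3 + 3 * N = c3 at *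
  generalize e7 : 2 * a + 4 + 3 * N + K = c4 at *
  generalize e8 : K - 3 * N = z1 at *
  generalize e9 : K + 1 = z2 at *
  generalize e10 : 1 + 2 * K = z3 at *
  field_simp
  subst e1 e2 e3 e4 e5 e6 e7 e8 e9 e10
  ring

theorem gsRhs_succ (a : ℂ) (n : ℕ) : gsRhs a (n + 1) =
    ((2 * a + 2 + 3 * n) * (2 * a + 3 + 3 * n) / ((3 * n + 2) * (3 * n + 1))) * gsRhs a n := by
  have n1 : 3 * (n : ℂ) + 1 ≠ 0 := by exact_mod_cast Nat.succ_ne_zero (3 * n)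
  have n2 : 3 * (n : ℂ) + 2 ≠ 0 := by exact_mod_cast Nat.succ_ne_zero (3 * n + 1)
  have t1 := third_ne n
  have t2 := twothird_ne n
  unfold gsRhs
  simp only [poch_succ]
  rw [show (2 : ℂ) / 3 + n = (3 * n + 2) / 3 by ring, show (1 : ℂ) / 3 + n = (3 * n + 1) / 3 by ring]
  generalize poch (1 / 3) n = D at *
  generalize poch (2 / 3) n = E at *
  field_simp
  try ring

theorem gs_tele (n : ℕ) (hn : 1 ≤ n) (a : ℂ) (ha : ∀ m : ℤ, 2 * a ≠ m) :
    ∀ K ≤ n + 2, ∑ k ∈ Finset.range K, (gsTerm ((n + 1 : ℕ) : ℂ) a k -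
      ((2 * a + 2 + 3 * n) * (2 * a + 3 + 3 * n) /
      ((3 * n + 2) * (3 * n + 1))) * gsTerm n a k) = gsG n a K := by
  intro K
  induction K with
  | zero => intro _; simp [gsG]
  | succ K ih =>
    intro h
    rw [Finset.sum_range_succ, ih (by omega), gs_step n hn a ha K (by omega)]
    ring

theorem poch_neg (n : ℕ) : poch (-(n : ℂ)) (n + 1) = 0 := by
  rw [poch_succ]; simp

theorem gs_generic (a : ℂ) (ha : ∀ m : ℤ, 2 * a ≠ m) (n : ℕ) (hn : 1 ≤ n) :
    ∑ k ∈ Finset.range (n + 1), gsTerm n a k = gsRhs a n := by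
  induction n, hn using Nat.le_induction with
  | base =>
    have a0 : a ≠ 0 := by intro h; apply ha 0; simp [h]
    have b0 : 2 * a + 4 ≠ 0 := by simpa using gen_ne a ha 4
    have a2 : a + 2 ≠ 0 := by intro h; apply b0; linear_combination 2 * h
    simp only [Finset.sum_range_succ, gsTerm, gsRhs, poch, Finset.prod_range_succ]
    simp
    rw [show 2 * a + 1 + 3 = 2 * (a + 2) by ring]
    field_simp
    ring
  | succ n hn ih =>
    have h := gs_tele n hn a ha (n + 2) le_rfl
    have hG : gsG n a (n + 2) = 0 := by
      have := poch_neg (n + 1)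
      push_cast at this
      unfold gsG gsU
      rw [this]
      simp
    have hT : gsTerm n a (n + 1) = 0 := by
      unfold gsTerm
      rw [poch_neg]
      simp
    rw [hG, Finset.sum_sub_distrib, ← Finset.mul_sum, Finset.sum_range_succ (fun k => gsTerm n a k),
      hT, add_zero, ih, ← gsRhs_succ] at h
    exact sub_eq_zero.1 h

theorem poch_cont (k : ℕ) (f : ℂ → ℂ) (hf : Continuous f) : Continuous fun a => poch (f a) k := by
  unfold poch
  fun_prop

/-- Gessel–Stanton open problem (6.3). -/
theorem gessel_stanton_6_3 (n : ℕ) (hn : 1 ≤ n) (a : ℂ)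
    (h1 : ∀ k ≤ n, poch (a / 2) k ≠ 0)
    (h2 : ∀ k ≤ n, poch (2 * a + 1 + 3 * (n : ℂ)) k ≠ 0) :
    ∑ k ∈ Finset.range (n + 1),
        poch (a + 1 / 2) k * poch a k * poch (-(n : ℂ)) k *
            poch ((2 * a + 1) / 3 + (n : ℂ)) k * poch (a / 2 + 1) k /
          (poch (1 / 2) k * poch (-3 * (n : ℂ)) k *
            poch (2 * a + 1 + 3 * (n : ℂ)) k * poch (a / 2) k *
            (k.factorial : ℂ)) * (9 : ℂ) ^ k
      = poch ((2 * a + 2) / 3) n * poch (2 * a / 3 + 1) n /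
          (poch (2 / 3) n * poch (1 / 3) n) := by
  change ∑ k ∈ Finset.range (n + 1), gsTerm n a k = gsRhs a n
  -- the exceptional set is countable, hence its complement is dense
  have hc : (Set.range fun m : ℤ => (m : ℂ) / 2).Countable := Set.countable_range _
  have hd : Dense (Set.range fun m : ℤ => (m : ℂ) / 2)ᶜ := hc.dense_compl ℂ
  have hL : ContinuousAt (fun x => ∑ k ∈ Finset.range (n + 1), gsTerm n x k) a := by
    apply tendsto_finsetSum
    intro k hk
    have hk' : k ≤ n := Nat.lt_succ_iff.1 (Finset.mem_range.1 hk)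
    unfold gsTerm
    refine ContinuousAt.mul (ContinuousAt.div (Continuous.continuousAt ?_)
      (Continuous.continuousAt ?_) ?_) continuousAt_const
    · refine ((((poch_cont k _ ?_).mul (poch_cont k _ ?_)).mul (poch_cont k _ ?_)).mul
        (poch_cont k _ ?_)).mul (poch_cont k _ ?_) <;> fun_prop
    · refine ((((poch_cont k _ ?_).mul (poch_cont k _ ?_)).mul (poch_cont k _ ?_)).mul
        (poch_cont k _ ?_)).mul continuous_const <;> fun_prop
    · have hf : (k.factorial : ℂ) ≠ 0 := by exact_mod_cast k.factorial_ne_zero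
      exact mul_ne_zero (mul_ne_zero (mul_ne_zero (mul_ne_zero (half_ne k)
        (neg3_ne n k (by omega))) (h2 k hk')) (h1 k hk')) hf
  have hR : ContinuousAt (fun x => gsRhs x n) a := by
    unfold gsRhs
    apply Continuous.continuousAt
    refine ((poch_cont n _ ?_).mul (poch_cont n _ ?_)).div_const _ <;> fun_prop
  have hne : (nhdsWithin a (Set.range fun m : ℤ => (m : ℂ) / 2)ᶜ).NeBot :=
    mem_closure_iff_nhdsWithin_neBot.1 (hd a)
  refine tendsto_nhds_unique (l := nhdsWithin a (Set.range fun m : ℤ => (m : ℂ) / 2)ᶜ) (hL.tendsto.mono_left nhdsWithin_le_nhds)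
    ((hR.tendsto.mono_left nhdsWithin_le_nhds).congr' ?_)
  filter_upwards [self_mem_nhdsWithin] with x hx
  refine (gs_generic x (fun m hm => hx ⟨m, ?_⟩) n hn).symm
  change (m : ℂ) / 2 = x
  rw [← hm]; ring
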